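/- Let X be a complex Banach space, T a bounded linear operator on X, and β an ordinal. Then 0 ∉ acc^{β+1} σ(T) if and only if there exists a bounded linear operator P on X with P² = P, PT = TP, 0 ∉ acc^β σ(T + P), and acc^β σ(TP) ⊆ {0}. -/

import Mathlib

/-!
A closed set `K ⊆ ℂ` is the union of a perfect set and a countable set, so `K \ cbd K β` is
countable. Hence if `0 ∉ acc^{β+1} σ(T)`, some arbitrarily small circle around `0` misses `σ(T)` and
encloses no point of `acc^β σ(T)` except possibly `0`, and the Riesz projection `P` of that circle
works: `σ(TP)` agrees away from `0` with the part of `σ(T)` inside the circle, while adding `P`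
translates that part by `1`, away from `0`. Conversely, for every idempotent `P` commuting with `T`,
`σ(T) \ {0} ⊆ σ(TP) ∪ σ(T + P)`, so away from `0` the set `acc^β σ(T)` is contained in the closed
set `acc^β σ(T + P)`, which does not contain `0`.
-/

open Ordinal Set

/-- The `α`-th Cantor–Bendixson derivative of a set `A ⊆ ℂ`, defined by transfinite
recursion: `cbd A 0 = A`, `cbd A (β+1) = derivedSet (cbd A β)` (the set of accumulation
points of `cbd A β`), and `cbd A α = ⋂_{β < α} cbd A β` for limit ordinals `α`. -/
noncomputable def cbd (A : Set ℂ) (α : Ordinal) : Set ℂ :=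
  Ordinal.limitRecOn α A (fun _ ih => derivedSet ih)
    (fun α _ ih => ⋂ (β : Set.Iio α), ih β.1 β.2)

variable {X : Type*} [NormedAddCommGroup X] [NormedSpace ℂ X] [CompleteSpace X]

/-- The restriction `T_M` of a bounded operator `T` to a `T`-invariant subspace `M`. -/
noncomputable def restr (T : X →L[ℂ] X) (M : Submodule ℂ X)
    (hM : ∀ x ∈ M, T x ∈ M) : M →L[ℂ] M :=
  { toLinearMap := T.toLinearMap.restrict hM
    cont := (T.continuous.comp continuous_subtype_val).subtype_mk _ }

section CantorBendixson

-- `CantorBendixson.iteratedDerivedSet` accepts only ordinals in the universe of the ambient space,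
-- here `Ordinal.{0}`, so its API does not cover `cbd`, which is universe polymorphic.

variable {s t : Set ℂ} {α : Ordinal}

lemma cbd_zero (s : Set ℂ) : cbd s 0 = s := by
  simp only [cbd, limitRecOn_zero]

lemma cbd_add_one (s : Set ℂ) (α : Ordinal) : cbd s (α + 1) = derivedSet (cbd s α) := by
  simp only [cbd, limitRecOn_add_one]

lemma mem_cbd_of_isSuccLimit (hα : Order.IsSuccLimit α) {z : ℂ} :
    z ∈ cbd s α ↔ ∀ β < α, z ∈ cbd s β := by
  simp [cbd, limitRecOn_limit _ _ _ _ hα]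

lemma isClosed_cbd (hs : IsClosed s) (α : Ordinal) : IsClosed (cbd s α) := by
  induction α using Ordinal.limitRecOn with
  | zero => rwa [cbd_zero]
  | add_one α _ => rw [cbd_add_one]; exact isClosed_derivedSet _
  | limit α hα ih =>
    have hInter : cbd s α = ⋂ β < α, cbd s β := by
      ext z
      simp only [mem_cbd_of_isSuccLimit hα, mem_iInter]
    rw [hInter]
    exact isClosed_biInter ih

lemma antitone_cbd (hs : IsClosed s) : Antitone (cbd s) := by
  intro β α hβα
  induction α using Ordinal.limitRecOn with
  | zero => rw [nonpos_iff_eq_zero.mp hβα]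
  | add_one α ih =>
    rcases hβα.eq_or_lt with rfl | hlt
    · exact subset_rfl
    · rw [cbd_add_one]
      exact ((isClosed_iff_derivedSet_subset _).mp (isClosed_cbd hs α)).trans
        (ih (Order.lt_add_one_iff.mp hlt))
  | limit α hα _ =>
    rcases hβα.eq_or_lt with rfl | hlt
    · exact subset_rfl
    · exact fun z hz => (mem_cbd_of_isSuccLimit hα).mp hz β hlt

lemma cbd_subset (hs : IsClosed s) (α : Ordinal) : cbd s α ⊆ s := by
  simpa only [cbd_zero] using antitone_cbd hs (zero_le (a := α))

lemma cbd_mono (hst : s ⊆ t) (α : Ordinal) : cbd s α ⊆ cbd t α := by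
  induction α using Ordinal.limitRecOn with
  | zero => rwa [cbd_zero, cbd_zero]
  | add_one α ih => rw [cbd_add_one, cbd_add_one]; exact derivedSet_mono _ _ ih
  | limit α hα ih =>
    intro z hz
    rw [mem_cbd_of_isSuccLimit hα] at hz ⊢
    exact fun β hβ => ih β hβ (hz β hβ)

lemma cbd_inter_subset_of_isOpen {U : Set ℂ} (hU : IsOpen U) (s : Set ℂ) (α : Ordinal) :
    cbd s α ∩ U ⊆ cbd (s ∩ U) α := by
  induction α using Ordinal.limitRecOn with
  | zero => rw [cbd_zero, cbd_zero]
  | add_one α ih =>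
    rintro z ⟨hz, hzU⟩
    rw [cbd_add_one, mem_derivedSet, accPt_iff_frequently] at hz ⊢
    refine (hz.and_eventually (hU.mem_nhds hzU)).mono ?_
    rintro y ⟨⟨hyz, hy⟩, hyU⟩
    exact ⟨hyz, ih ⟨hy, hyU⟩⟩
  | limit α hα ih =>
    rintro z ⟨hz, hzU⟩
    rw [mem_cbd_of_isSuccLimit hα] at hz ⊢
    exact fun β hβ => ih β hβ ⟨hz β hβ, hzU⟩

lemma cbd_union (hs : IsClosed s) (ht : IsClosed t) (α : Ordinal) :
    cbd (s ∪ t) α = cbd s α ∪ cbd t α := by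
  refine subset_antisymm ?_
    (union_subset (cbd_mono subset_union_left α) (cbd_mono subset_union_right α))
  induction α using Ordinal.limitRecOn with
  | zero => simp only [cbd_zero, subset_rfl]
  | add_one α ih =>
    rw [cbd_add_one, cbd_add_one, cbd_add_one, ← derivedSet_union]
    exact derivedSet_mono _ _ ih
  | limit α hα ih =>
    intro z hz
    by_contra hnot
    simp only [mem_union, mem_cbd_of_isSuccLimit hα, not_or, not_forall] at hnot
    obtain ⟨⟨β, hβ, hzβ⟩, γ, hγ, hzγ⟩ := hnot
    have hmax : max β γ < α := max_lt hβ hγ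
    rcases ih _ hmax ((mem_cbd_of_isSuccLimit hα).mp hz _ hmax) with h | h
    · exact hzβ (antitone_cbd hs (le_max_left β γ) h)
    · exact hzγ (antitone_cbd ht (le_max_right β γ) h)

lemma subset_cbd_of_preperfect (hs : Preperfect s) (hst : s ⊆ t) (α : Ordinal) :
    s ⊆ cbd t α := by
  induction α using Ordinal.limitRecOn with
  | zero => rwa [cbd_zero]
  | add_one α ih =>
    rw [cbd_add_one]
    exact (preperfect_iff_subset_derivedSet.mp hs).trans (derivedSet_mono _ _ ih)
  | limit α hα ih => exact fun z hz => (mem_cbd_of_isSuccLimit hα).mpr fun β hβ => ih β hβ hz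

lemma countable_diff_cbd (hs : IsClosed s) (α : Ordinal) : (s \ cbd s α).Countable := by
  obtain ⟨V, D, hV, hD, rfl⟩ := exists_countable_union_perfect_of_isClosed hs
  refine hV.mono ?_
  rintro z ⟨hzV | hzD, hz⟩
  · exact hzV
  · exact absurd (subset_cbd_of_preperfect hD.acc subset_union_right α hzD) hz

lemma mem_of_mem_cbd_add_one_of_diff_subset {x : ℂ} (hx : x ∈ cbd s (α + 1)) (ht : IsClosed t)
    (hst : cbd s α \ {x} ⊆ t) : x ∈ t := by
  rw [cbd_add_one, mem_derivedSet, accPt_principal_iff_clusterPt, ← mem_closure_iff_clusterPt] at hx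
  exact closure_minimal hst ht hx

end CantorBendixson

section Circles

open Metric

lemma exists_sphere_disjoint_of_countable {E : Type*} [PseudoMetricSpace E] {s : Set E}
    (hs : s.Countable) (c : E) {R : ℝ} (hR : 0 < R) :
    ∃ r ∈ Ioo 0 R, Disjoint (sphere c r) s := by
  obtain ⟨r, hr, hrs⟩ : ∃ r ∈ Ioo 0 R, r ∉ (dist · c) '' s := by
    refine not_subset.mp fun hsub => ?_
    exact Cardinal.Real.Ioo_countable_iff.not.mpr hR.not_ge ((hs.image _).mono hsub)
  exact ⟨r, hr, disjoint_left.mpr fun z hzr hzs => hrs ⟨z, hzs, hzr⟩⟩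

lemma exists_sphere_disjoint_of_notMem_cbd_add_one {s : Set ℂ} (hs : IsClosed s) {α : Ordinal}
    {c : ℂ} (hc : c ∉ cbd s (α + 1)) {R : ℝ} (hR : 0 < R) :
    ∃ r ∈ Ioo 0 R, Disjoint (sphere c r) s ∧ cbd s α ∩ closedBall c r ⊆ {c} := by
  rw [cbd_add_one, mem_derivedSet, accPt_iff_frequently, Filter.not_frequently,
    Metric.eventually_nhds_iff_ball] at hc
  obtain ⟨ε, hε, hball⟩ := hc
  obtain ⟨r, ⟨hr, hrlt⟩, hdisj⟩ :=
    exists_sphere_disjoint_of_countable (countable_diff_cbd hs α) c (lt_min hR hε)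
  have hcbd : cbd s α ∩ closedBall c r ⊆ {c} := by
    rintro z ⟨hz, hzr⟩
    by_contra hzc
    exact hball z (closedBall_subset_ball (hrlt.trans_le (min_le_right _ _)) hzr) ⟨hzc, hz⟩
  refine ⟨r, ⟨hr, hrlt.trans_le (min_le_left _ _)⟩, disjoint_left.mpr fun z hzr hzs => ?_, hcbd⟩
  refine disjoint_left.mp hdisj hzr ⟨hzs, fun hz => ?_⟩
  exact ne_of_mem_sphere hzr hr.ne' (hcbd ⟨hz, sphere_subset_closedBall hzr⟩)

lemma exists_annulus_disjoint {E : Type*} [PseudoMetricSpace E] {s : Set E} (hs : IsCompact s)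
    {c : E} {r : ℝ} (h : Disjoint (sphere c r) s) :
    ∃ R > r, Disjoint (closedBall c R \ ball c r) s := by
  have hr : r ∉ (dist · c) '' s := fun ⟨z, hzs, hzr⟩ => disjoint_left.mp h hzr hzs
  have hclosed : IsClosed ((dist · c) '' s) :=
    (hs.image (continuous_id.dist continuous_const)).isClosed
  obtain ⟨ε, hε, hball⟩ :=
    nhds_basis_closedBall.mem_iff.mp (hclosed.isOpen_compl.mem_nhds hr)
  refine ⟨r + ε, lt_add_of_pos_right r hε, disjoint_left.mpr fun z ⟨hzR, hzr⟩ hzs => ?_⟩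
  rw [mem_closedBall] at hzR
  rw [mem_ball, not_lt] at hzr
  refine hball ?_ (mem_image_of_mem (dist · c) hzs)
  rw [mem_closedBall, Real.dist_eq, abs_of_nonneg (sub_nonneg.mpr hzr)]
  exact sub_le_iff_le_add'.mpr hzR

end Circles

section CornerSpectrum

lemma isUnit_mul_add_one_sub_of_mul_eq {A : Type*} [Ring A] {p a b : A} (hp : IsIdempotentElem p)
    (hab : Commute a b) (h : a * b = p) : IsUnit (a * p + (1 - p)) := by
  have hap : Commute a p := h ▸ (Commute.refl a).mul_right hab
  have hbp : Commute b p := h ▸ hab.symm.mul_right (Commute.refl b)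
  have mul_eq_one {x y : A} (hyp : Commute y p) (hxy : x * y = p) :
      (x * p + (1 - p)) * (y * p + (1 - p)) = 1 := by
    have hcorner : x * p * (y * p) = p := by
      rw [mul_assoc, ← mul_assoc p, ← hyp.eq, mul_assoc, ← mul_assoc, hxy, hp.eq, hp.eq]
    have hcross : x * p * (1 - p) = 0 := by rw [mul_assoc, hp.mul_one_sub_self, mul_zero]
    have hcross' : (1 - p) * (y * p) = 0 := by
      rw [hyp.eq, ← mul_assoc, hp.one_sub_mul_self, zero_mul]
    rw [add_mul, mul_add, mul_add, hcorner, hcross, hcross', hp.one_sub.eq, add_zero, zero_add,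
      _root_.add_sub_cancel]
  exact ⟨⟨a * p + (1 - p), b * p + (1 - p), mul_eq_one hbp h, mul_eq_one hap (hab.eq ▸ h)⟩, rfl⟩

lemma isUnit_iff_isUnit_corners {A : Type*} [Ring A] {p a : A} (hp : IsIdempotentElem p)
    (hpa : Commute p a) :
    IsUnit a ↔ IsUnit (a * p + (1 - p)) ∧ IsUnit (a * (1 - p) + p) := by
  have hpa' : Commute (1 - p) a := (Commute.one_left a).sub_left hpa
  have hcomm : Commute (a * p + (1 - p)) (a * (1 - p) + p) := by
    have hcomm_a : Commute (a * p + (1 - p)) a := ((Commute.refl a).mul_left hpa).add_left hpa'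
    have hcomm_p : Commute (a * p + (1 - p)) p :=
      (hpa.symm.mul_left (Commute.refl p)).add_left
        ((Commute.one_left p).sub_left (Commute.refl p))
    exact (hcomm_a.mul_right ((Commute.one_right _).sub_right hcomm_p)).add_right hcomm_p
  have hfactor : (a * p + (1 - p)) * (a * (1 - p) + p) = a := by
    have hcorner : a * p * (a * (1 - p)) = 0 := by
      rw [mul_assoc, ← mul_assoc p, hpa.eq, mul_assoc, hp.mul_one_sub_self, mul_zero, mul_zero]
    have hcorner' : (1 - p) * (a * (1 - p)) = a * (1 - p) := by
      rw [← mul_assoc, hpa'.eq, mul_assoc, hp.one_sub.eq]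
    rw [add_mul, mul_add, mul_add, hcorner, hcorner', mul_assoc, hp.eq, hp.one_sub_mul_self,
      zero_add, add_zero, ← mul_add, _root_.add_sub_cancel, mul_one]
  rw [← hcomm.isUnit_mul_iff, hfactor]

/-- The spectrum of `a * p` in the corner ring `p * A * p`, for an idempotent `p` commuting with
`a`. Invertibility of `(r - a) * p` in the corner, whose unit is `p`, is encoded as invertibility
in `A` of its extension by the identity on the complementary corner. -/
def cornerSpectrum (R : Type*) {A : Type*} [CommRing R] [Ring A] [Algebra R A] (p a : A) : Set R :=
  {r | ¬IsUnit ((algebraMap R A r - a) * p + (1 - p))}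

section CommRing

variable {R A : Type*} [CommRing R] [Ring A] [Algebra R A] {p a b : A} {r : R}

lemma cornerSpectrum_congr (h : a * p = b * p) :
    cornerSpectrum R p a = cornerSpectrum R p b := by
  simp only [cornerSpectrum, sub_mul, h]

lemma mem_cornerSpectrum_add_one_iff :
    r ∈ cornerSpectrum R p (a + 1) ↔ r - 1 ∈ cornerSpectrum R p a := by
  simp only [cornerSpectrum, mem_ofPred_eq, map_sub, map_one, _root_.sub_sub, add_comm a 1]

lemma notMem_cornerSpectrum_of_mul_eq (hp : IsIdempotentElem p) (hab : Commute a b)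
    (h : (algebraMap R A r - a) * b = p) : r ∉ cornerSpectrum R p a :=
  not_not.mpr <| isUnit_mul_add_one_sub_of_mul_eq hp
    ((Algebra.commute_algebraMap_left r b).sub_left hab) h

lemma spectrum_eq_cornerSpectrum_union (hp : IsIdempotentElem p) (hpa : Commute p a) :
    spectrum R a = cornerSpectrum R p a ∪ cornerSpectrum R (1 - p) a := by
  ext r
  simp only [spectrum.mem_iff, cornerSpectrum, mem_union, mem_ofPred_eq, sub_sub_cancel,
    isUnit_iff_isUnit_corners hp ((Algebra.commute_algebraMap_right r p).sub_right hpa),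
    not_and_or]

lemma spectrum_add_idempotent (hp : IsIdempotentElem p) (hpa : Commute p a) :
    spectrum R (a + p) = cornerSpectrum R p (a + 1) ∪ cornerSpectrum R (1 - p) a := by
  rw [spectrum_eq_cornerSpectrum_union hp (hpa.add_right (Commute.refl p)),
    cornerSpectrum_congr (b := a + 1) (by rw [add_mul, hp.eq, add_one_mul]),
    cornerSpectrum_congr (p := 1 - p) (b := a)
      (by rw [add_mul, hp.mul_one_sub_self, add_zero])]

end CommRing

section Field

variable {𝕜 A : Type*} [Field 𝕜] [Ring A] [Algebra 𝕜 A] {p a : A}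

lemma cornerSpectrum_zero_subset (hp : IsIdempotentElem p) :
    cornerSpectrum 𝕜 p (0 : A) ⊆ {0} := by
  intro r hr
  by_contra hr0
  refine notMem_cornerSpectrum_of_mul_eq (b := r⁻¹ • p) hp (Commute.zero_left _) ?_ hr
  rw [_root_.sub_zero, ← Algebra.smul_def, smul_inv_smul₀ hr0]

lemma spectrum_mul_idempotent_diff_zero (hp : IsIdempotentElem p) (hpa : Commute p a) :
    spectrum 𝕜 (a * p) \ {0} = cornerSpectrum 𝕜 p a \ {0} := by
  rw [spectrum_eq_cornerSpectrum_union hp (hpa.mul_right (Commute.refl p)),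
    cornerSpectrum_congr (b := a) (by rw [mul_assoc, hp.eq]),
    cornerSpectrum_congr (p := 1 - p) (b := 0)
      (by rw [mul_assoc, hp.mul_one_sub_self, mul_zero, zero_mul]),
    union_sdiff_distrib, sdiff_eq_empty.mpr (cornerSpectrum_zero_subset hp.one_sub), union_empty]

lemma spectrum_diff_zero_subset (hp : IsIdempotentElem p) (hpa : Commute p a) :
    spectrum 𝕜 a \ {0} ⊆ spectrum 𝕜 (a * p) ∪ spectrum 𝕜 (a + p) := by
  rw [spectrum_eq_cornerSpectrum_union hp hpa, union_sdiff_distrib,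
    ← spectrum_mul_idempotent_diff_zero hp hpa, spectrum_add_idempotent hp hpa]
  exact union_subset_union sdiff_subset (sdiff_subset.trans subset_union_right)

end Field

end CornerSpectrum

section CircleIntegral

open Metric

lemma circleIntegral_clm_comp_comm {E F : Type*} [NormedAddCommGroup E] [NormedSpace ℂ E]
    [CompleteSpace E] [NormedAddCommGroup F] [NormedSpace ℂ F] [CompleteSpace F] (L : E →L[ℂ] F)
    {f : ℂ → E} {c : ℂ} {r : ℝ} (hf : CircleIntegrable f c r) :
    (∮ z in C(c, r), L (f z)) = L (∮ z in C(c, r), f z) := by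
  simp only [circleIntegral, ← L.intervalIntegral_comp_comm hf.out, map_smul]

lemma circleIntegral_sub_inv_of_notMem_closedBall {c w : ℂ} {r : ℝ} (hr : 0 ≤ r)
    (hw : w ∉ closedBall c r) : (∮ z in C(c, r), (z - w)⁻¹) = 0 := by
  refine DiffContOnCl.circleIntegral_eq_zero hr (DifferentiableOn.diffContOnCl_ball
    (U := closedBall c r) (fun z hz => ?_) subset_rfl)
  have hzw : z - w ≠ 0 := sub_ne_zero.mpr (ne_of_mem_of_not_mem hz hw)
  exact ((differentiableAt_id.sub_const w).inv hzw).differentiableWithinAt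

variable {A : Type*} [NormedRing A] [NormedAlgebra ℂ A] [CompleteSpace A] {f : ℂ → A} {c : ℂ}
  {r : ℝ}

lemma circleIntegral_const_mul (a : A) (hf : CircleIntegrable f c r) :
    (∮ z in C(c, r), a * f z) = a * ∮ z in C(c, r), f z :=
  circleIntegral_clm_comp_comm (ContinuousLinearMap.mul ℂ A a) hf

lemma circleIntegral_mul_const (a : A) (hf : CircleIntegrable f c r) :
    (∮ z in C(c, r), f z * a) = (∮ z in C(c, r), f z) * a :=
  circleIntegral_clm_comp_comm ((ContinuousLinearMap.mul ℂ A).flip a) hf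

lemma commute_circleIntegral {a : A} (h : ∀ z, Commute a (f z)) :
    Commute a (∮ z in C(c, r), f z) := by
  by_cases hf : CircleIntegrable f c r
  · rw [commute_iff_eq, ← circleIntegral_const_mul a hf, ← circleIntegral_mul_const a hf]
    simp only [(h _).eq]
  · rw [circleIntegral.integral_undef hf]
    exact Commute.zero_right a

end CircleIntegral

section RieszProjection

open Metric
open scoped Real

lemma commute_resolvent {R A : Type*} [CommRing R] [Ring A] [Algebra R A] (a : A) (r : R) :
    Commute a (resolvent a r) := by
  have hcomm : Commute a (algebraMap R A r - a) :=
    (Algebra.commute_algebraMap_right r a).sub_right (Commute.refl a)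
  by_cases hr : r ∈ resolventSet R a
  · rw [spectrum.resolvent_eq hr]
    exact Commute.units_inv_right hcomm
  · rw [resolvent, Ring.inverse_non_unit _ hr]
    exact Commute.zero_right a

variable {A : Type*} [NormedRing A] [NormedAlgebra ℂ A] [CompleteSpace A] {a : A} {c w : ℂ}
  {r R : ℝ}

lemma differentiableOn_resolvent (a : A) :
    DifferentiableOn ℂ (resolvent a) (resolventSet ℂ a) := fun _ hz =>
  (spectrum.hasDerivAt_resolvent_const_left hz).differentiableAt.differentiableWithinAt

lemma circleIntegrable_resolvent (hr : 0 ≤ r) (h : sphere c r ⊆ resolventSet ℂ a) :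
    CircleIntegrable (resolvent a) c r :=
  ((differentiableOn_resolvent a).continuousOn.mono h).circleIntegrable hr

/-- The Riesz projection of `a` for the circle with centre `c` and radius `r`. It is an idempotent
splitting `a` into a part with spectrum inside and a part with spectrum outside the circle, if the
circle does not meet the spectrum of `a`. -/
noncomputable def rieszProjection (a : A) (c : ℂ) (r : ℝ) : A :=
  (2 * π * Complex.I : ℂ)⁻¹ • ∮ z in C(c, r), resolvent a z

/-- The Cauchy transform of the resolvent of `a` along the circle with centre `c` and radius `r`:
up to a factor, it inverts `w - a` on the corner of the Riesz projection if `w` is outside the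
circle, and on the complementary corner if `w` is inside. -/
noncomputable def resolventCauchyTransform (a : A) (c : ℂ) (r : ℝ) (w : ℂ) : A :=
  (2 * π * Complex.I : ℂ)⁻¹ • ∮ z in C(c, r), (z - w)⁻¹ • resolvent a z

lemma commute_rieszProjection (a : A) (c : ℂ) (r : ℝ) : Commute a (rieszProjection a c r) :=
  (commute_circleIntegral fun z => commute_resolvent a z).smul_right _

lemma commute_resolventCauchyTransform (a : A) (c : ℂ) (r : ℝ) (w : ℂ) :
    Commute a (resolventCauchyTransform a c r w) :=
  (commute_circleIntegral fun z => (commute_resolvent a z).smul_right _).smul_right _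

lemma differentiableOn_resolventCauchyTransform (hr : 0 < r) (h : sphere c r ⊆ resolventSet ℂ a) :
    DifferentiableOn ℂ (resolventCauchyTransform a c r) (ball c r) := by
  lift r to NNReal using hr.le
  have hseries := hasFPowerSeriesOn_cauchy_integral
    (circleIntegrable_resolvent hr.le h) (NNReal.coe_pos.mp hr)
  rw [← eball_coe]
  exact hseries.differentiableOn

lemma sub_mul_resolventCauchyTransform (hr : 0 ≤ r) (h : sphere c r ⊆ resolventSet ℂ a)
    (hw : w ∉ sphere c r) :
    (algebraMap ℂ A w - a) * resolventCauchyTransform a c r w =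
      ((2 * π * Complex.I : ℂ)⁻¹ * ∮ z in C(c, r), (z - w)⁻¹) • (1 : A) -
        rieszProjection a c r := by
  have hinv : ContinuousOn (fun z => (z - w)⁻¹) (sphere c r) :=
    (continuousOn_id.sub continuousOn_const).inv₀
      fun z hz => sub_ne_zero.mpr (ne_of_mem_of_not_mem hz hw)
  have hres : ContinuousOn (resolvent a) (sphere c r) :=
    (differentiableOn_resolvent a).continuousOn.mono h
  have hint : CircleIntegrable (fun z => (z - w)⁻¹ • resolvent a z) c r :=
    (hinv.smul hres).circleIntegrable hr
  have hint_one : CircleIntegrable (fun z => (z - w)⁻¹ • (1 : A)) c r :=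
    (hinv.smul continuousOn_const).circleIntegrable hr
  have hintegrand : EqOn (fun z => (algebraMap ℂ A w - a) * ((z - w)⁻¹ • resolvent a z))
      (fun z => (z - w)⁻¹ • (1 : A) - resolvent a z) (sphere c r) := by
    intro z hz
    have hzw : z - w ≠ 0 := sub_ne_zero.mpr (ne_of_mem_of_not_mem hz hw)
    have hsplit : algebraMap ℂ A w - a = (algebraMap ℂ A z - a) - (z - w) • (1 : A) := by
      rw [sub_smul, ← Algebra.algebraMap_eq_smul_one, ← Algebra.algebraMap_eq_smul_one]
      abel
    have hmul : (algebraMap ℂ A z - a) * resolvent a z = 1 := Ring.mul_inverse_cancel _ (h hz)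
    simp only [mul_smul_comm, hsplit, sub_mul, hmul, smul_mul_assoc, one_mul, smul_sub,
      inv_smul_smul₀ hzw]
  rw [resolventCauchyTransform, rieszProjection, mul_smul_comm,
    ← circleIntegral_const_mul _ hint, circleIntegral.integral_congr hr hintegrand,
    circleIntegral.integral_sub hint_one (hres.circleIntegrable hr),
    circleIntegral.integral_smul_const, smul_sub, smul_smul]

lemma sub_mul_resolventCauchyTransform_of_mem_ball (h : sphere c r ⊆ resolventSet ℂ a)
    (hw : w ∈ ball c r) :
    (algebraMap ℂ A w - a) * resolventCauchyTransform a c r w = 1 - rieszProjection a c r := by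
  have hr : 0 ≤ r := (pos_of_mem_ball hw).le
  rw [sub_mul_resolventCauchyTransform hr h fun hw' => (mem_ball.mp hw).ne hw',
    circleIntegral.integral_sub_inv_of_mem_ball hw, inv_mul_cancel₀ Complex.two_pi_I_ne_zero,
    one_smul]

lemma sub_mul_resolventCauchyTransform_of_notMem_closedBall (hr : 0 ≤ r)
    (h : sphere c r ⊆ resolventSet ℂ a) (hw : w ∉ closedBall c r) :
    (algebraMap ℂ A w - a) * resolventCauchyTransform a c r w = -rieszProjection a c r := by
  rw [sub_mul_resolventCauchyTransform hr h fun hw' => hw (sphere_subset_closedBall hw'),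
    circleIntegral_sub_inv_of_notMem_closedBall hr hw, mul_zero, zero_smul, _root_.zero_sub]

lemma rieszProjection_eq_of_annulus (hr : 0 < r) (hrR : r ≤ R)
    (h : closedBall c R \ ball c r ⊆ resolventSet ℂ a) :
    rieszProjection a c R = rieszProjection a c r := by
  rw [rieszProjection, rieszProjection,
    Complex.circleIntegral_eq_of_differentiable_on_annulus_off_countable hr hrR countable_empty
      ((differentiableOn_resolvent a).continuousOn.mono h)]
  rintro z ⟨⟨hzR, hzr⟩, -⟩
  have hz : z ∈ resolventSet ℂ a :=
    h ⟨ball_subset_closedBall hzR, fun hz => hzr (ball_subset_closedBall hz)⟩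
  exact (spectrum.hasDerivAt_resolvent_const_left hz).differentiableAt

theorem isIdempotentElem_rieszProjection (hr : 0 < r) (h : sphere c r ⊆ resolventSet ℂ a) :
    IsIdempotentElem (rieszProjection a c r) := by
  obtain ⟨R, hrR, hR⟩ := exists_annulus_disjoint (spectrum.isCompact a)
    (disjoint_compl_right_iff_subset.mpr h)
  have hannulus : closedBall c R \ ball c r ⊆ resolventSet ℂ a :=
    disjoint_compl_right_iff_subset.mp hR
  have hsphere : sphere c R ⊆ resolventSet ℂ a := fun z hz => hannulus
    ⟨sphere_subset_closedBall hz, fun hz' => hrR.not_gt ((mem_sphere.mp hz) ▸ hz')⟩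
  set P := rieszProjection a c r with hP
  -- The Cauchy transform along the larger circle continues `resolvent a · * (1 - P)`
  -- holomorphically to the whole disc, so the integral of the latter along the smaller circle
  -- vanishes.
  have hcont : EqOn (resolventCauchyTransform a c R) (fun w => resolvent a w * (1 - P))
      (sphere c r) := by
    intro w hw
    have hwR : w ∈ ball c R := sphere_subset_ball hrR hw
    dsimp only
    rw [hP, ← rieszProjection_eq_of_annulus hr hrR.le hannulus,
      ← sub_mul_resolventCauchyTransform_of_mem_ball hsphere hwR, ← mul_assoc, resolvent,
      Ring.inverse_mul_cancel _ (h hw), one_mul]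
  have hzero : (∮ w in C(c, r), resolvent a w * (1 - P)) = 0 := by
    rw [← circleIntegral.integral_congr hr.le hcont]
    exact ((differentiableOn_resolventCauchyTransform (hr.trans hrR) hsphere).diffContOnCl_ball
      (closedBall_subset_ball hrR)).circleIntegral_eq_zero hr.le
  rw [isIdempotentElem_iff_mul_one_sub_self]
  nth_rw 1 [hP]
  rw [rieszProjection, smul_mul_assoc,
    ← circleIntegral_mul_const _ (circleIntegrable_resolvent hr.le h), hzero, smul_zero]

theorem cornerSpectrum_rieszProjection_subset (hr : 0 < r) (h : sphere c r ⊆ resolventSet ℂ a) :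
    cornerSpectrum ℂ (rieszProjection a c r) a ⊆ closedBall c r := by
  refine fun w hw => by_contra fun hwr => ?_
  refine notMem_cornerSpectrum_of_mul_eq (isIdempotentElem_rieszProjection hr h)
    (commute_resolventCauchyTransform a c r w).neg_right ?_ hw
  rw [mul_neg, sub_mul_resolventCauchyTransform_of_notMem_closedBall hr.le h hwr, neg_neg]

theorem cornerSpectrum_one_sub_rieszProjection_subset (hr : 0 < r)
    (h : sphere c r ⊆ resolventSet ℂ a) :
    cornerSpectrum ℂ (1 - rieszProjection a c r) a ⊆ (ball c r)ᶜ := fun w hw hwr =>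
  notMem_cornerSpectrum_of_mul_eq (isIdempotentElem_rieszProjection hr h).one_sub
    (commute_resolventCauchyTransform a c r w)
    (sub_mul_resolventCauchyTransform_of_mem_ball h hwr) hw

end RieszProjection

section BanachAlgebra

open Metric

variable {A : Type*} [NormedRing A] [NormedAlgebra ℂ A] [CompleteSpace A]

lemma exists_idempotent_of_zero_notMem_cbd_add_one {a : A} {β : Ordinal}
    (h0 : (0 : ℂ) ∉ cbd (spectrum ℂ a) (β + 1)) :
    ∃ p : A, IsIdempotentElem p ∧ Commute p a ∧ (0 : ℂ) ∉ spectrum ℂ (a + p) ∧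
      cbd (spectrum ℂ (a * p)) β ⊆ {0} := by
  obtain ⟨r, ⟨hr, hr1⟩, hdisj, hcbd⟩ :=
    exists_sphere_disjoint_of_notMem_cbd_add_one (spectrum.isClosed a) h0 one_pos
  have hsphere : sphere 0 r ⊆ resolventSet ℂ a := disjoint_compl_right_iff_subset.mp hdisj
  set p := rieszProjection a 0 r
  have hp : IsIdempotentElem p := isIdempotentElem_rieszProjection hr hsphere
  have hpa : Commute p a := (commute_rieszProjection a 0 r).symm
  have hinside : cornerSpectrum ℂ p a ⊆ closedBall 0 r :=
    cornerSpectrum_rieszProjection_subset hr hsphere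
  have houtside : cornerSpectrum ℂ (1 - p) a ⊆ (ball 0 r)ᶜ :=
    cornerSpectrum_one_sub_rieszProjection_subset hr hsphere
  refine ⟨p, hp, hpa, ?_, fun z hz => by_contra fun hz0 => hz0 (hcbd ?_)⟩
  · rw [spectrum_add_idempotent hp hpa]
    rintro (h | h)
    · have hnorm := hinside (mem_cornerSpectrum_add_one_iff.mp h)
      rw [_root_.zero_sub, mem_closedBall_zero_iff, norm_neg, norm_one] at hnorm
      exact hr1.not_ge hnorm
    · exact houtside h (mem_ball_self hr)
  · have hdiff : spectrum ℂ (a * p) \ {0} ⊆ cornerSpectrum ℂ p a :=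
      (spectrum_mul_idempotent_diff_zero hp hpa).subset.trans sdiff_subset
    have hcorner : cornerSpectrum ℂ p a ⊆ spectrum ℂ a := by
      rw [spectrum_eq_cornerSpectrum_union hp hpa]
      exact subset_union_left
    exact ⟨cbd_mono (hdiff.trans hcorner) β
        (cbd_inter_subset_of_isOpen isOpen_compl_singleton _ β ⟨hz, hz0⟩),
      hinside (hdiff ⟨cbd_subset (spectrum.isClosed _) β hz, hz0⟩)⟩

lemma cbd_spectrum_diff_zero_subset {a p : A} (hp : IsIdempotentElem p) (hpa : Commute p a)
    (β : Ordinal) :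
    cbd (spectrum ℂ a) β \ {0} ⊆
      cbd (spectrum ℂ (a * p)) β ∪ cbd (spectrum ℂ (a + p)) β := by
  rw [← cbd_union (spectrum.isClosed _) (spectrum.isClosed _)]
  exact (cbd_inter_subset_of_isOpen isOpen_compl_singleton _ β).trans
    (cbd_mono (spectrum_diff_zero_subset hp hpa) β)

theorem not_mem_cbd_succ_iff_exists_projection_general (a : A) (β : Ordinal) :
    (0 : ℂ) ∉ cbd (spectrum ℂ a) (β + 1) ↔
      ∃ p : A, p * p = p ∧ p * a = a * p ∧
        (0 : ℂ) ∉ cbd (spectrum ℂ (a + p)) β ∧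
        cbd (spectrum ℂ (a * p)) β ⊆ {0} := by
  constructor
  · intro h0
    obtain ⟨p, hp, hpa, hadd, hmul⟩ := exists_idempotent_of_zero_notMem_cbd_add_one h0
    exact ⟨p, hp, hpa, fun h => hadd (cbd_subset (spectrum.isClosed _) β h), hmul⟩
  · rintro ⟨p, hp, hpa, hadd, hmul⟩ h0
    refine hadd (mem_of_mem_cbd_add_one_of_diff_subset h0
      (isClosed_cbd (spectrum.isClosed _) β) fun z hz => ?_)
    exact (cbd_spectrum_diff_zero_subset hp hpa β hz).resolve_left fun h => hz.2 (hmul h)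

end BanachAlgebra

/-- `0 ∉ acc^{β+1} σ(T)` iff there is a bounded projection `P` commuting with `T` such
that `0 ∉ acc^β σ(T + P)` and `acc^β σ(TP) ⊆ {0}`. -/
theorem not_mem_cbd_succ_iff_exists_projection (T : X →L[ℂ] X) (β : Ordinal) :
    (0 : ℂ) ∉ cbd (spectrum ℂ T) (β + 1) ↔
      ∃ P : X →L[ℂ] X, P * P = P ∧ P * T = T * P ∧
        (0 : ℂ) ∉ cbd (spectrum ℂ (T + P)) β ∧
        cbd (spectrum ℂ (T * P)) β ⊆ {0} :=
  not_mem_cbd_succ_iff_exists_projection_general T β
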